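/- Let V ⊆ Π be a linear subspace with Σ ⊆ V, Q(V^r) ⊆ V^m and P(V^m) ⊆ V^n, and write ker Q = { v ∈ Π^r : Q̂ i(v(i)) = 0 for all i ∈ ι }. Suppose that H(V) is finite dimensional and that Q satisfies the regularity condition: for every u ∈ Π^r with Q u ∈ V^m there exists v ∈ ker Q such that u − v ∈ V^r. Then the linear maps H(Σ) → H(V) → H(Π) induced by the inclusions Σ^m ↪ V^m ↪ Π^m are isomorphisms, and dim H(V) = ∑_{i∈ι} dim(ker P̂ i / ran Q̂ i). -/

import Mathlib

noncomputable section

open Submodule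

variable {ι : Type*}

/-- The submodule of finitely supported families in a product of `ℂ`-modules. -/
def finSupp (F : ι → Type*) [∀ i, AddCommGroup (F i)] [∀ i, Module ℂ (F i)] :
    Submodule ℂ (∀ i, F i) where
  carrier := {a | {i | a i ≠ 0}.Finite}
  zero_mem' := by
    simp
  add_mem' := by
    intro a b ha hb
    refine (ha.union hb).subset fun i hi => ?_
    simp only [Set.mem_setOf_eq, Set.mem_union] at hi ⊢
    by_contra h
    push_neg at h
    exact hi (by simp [h.1, h.2])
  smul_mem' := by
    intro c a ha
    refine ha.subset fun i hi => ?_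
    simp only [Set.mem_setOf_eq] at hi ⊢
    intro h
    exact hi (by simp [h])

/-- The componentwise linear map induced by a family of linear maps. -/
def pwMap {F G : ι → Type*} [∀ i, AddCommGroup (F i)] [∀ i, Module ℂ (F i)]
    [∀ i, AddCommGroup (G i)] [∀ i, Module ℂ (G i)]
    (T : ∀ i, F i →ₗ[ℂ] G i) : (∀ i, F i) →ₗ[ℂ] (∀ i, G i) where
  toFun u i := T i (u i)
  map_add' u v := by funext i; simp
  map_smul' c u := by funext i; simp

@[simp] theorem pwMap_apply {F G : ι → Type*} [∀ i, AddCommGroup (F i)] [∀ i, Module ℂ (F i)]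
    [∀ i, AddCommGroup (G i)] [∀ i, Module ℂ (G i)]
    (T : ∀ i, F i →ₗ[ℂ] G i) (u : ∀ i, F i) (i : ι) : pwMap T u i = T i (u i) := rfl

/-- The `k`-th power `V^k` of a subspace `V ⊆ Π`, inside `∏ i, (E i)^k`. -/
def Vpow {E : ι → Type*} [∀ i, AddCommGroup (E i)] [∀ i, Module ℂ (E i)]
    (V : Submodule ℂ (∀ i, E i)) (k : ℕ) : Submodule ℂ (∀ i, Fin k → E i) where
  carrier := {u | ∀ j : Fin k, (fun i => u i j) ∈ V}
  zero_mem' := fun _ => V.zero_mem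
  add_mem' := fun ha hb j => V.add_mem (ha j) (hb j)
  smul_mem' := fun c _a ha j => V.smul_mem c (ha j)

theorem Vpow_mono {E : ι → Type*} [∀ i, AddCommGroup (E i)] [∀ i, Module ℂ (E i)]
    {V W : Submodule ℂ (∀ i, E i)} (h : V ≤ W) (k : ℕ) : Vpow V k ≤ Vpow W k :=
  fun _ hu j => h (hu j)

section Coh

variable {E : ι → Type*} [∀ i, AddCommGroup (E i)] [∀ i, Module ℂ (E i)] {r m n : ℕ}

/-- The local cohomology space `ker P̂ i / ran Q̂ i`. -/
abbrev locCoh (Qh : ∀ i, (Fin r → E i) →ₗ[ℂ] (Fin m → E i))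
    (Ph : ∀ i, (Fin m → E i) →ₗ[ℂ] (Fin n → E i)) (i : ι) : Type _ :=
  ↥(LinearMap.ker (Ph i)) ⧸
    ((LinearMap.range (Qh i)).comap (LinearMap.ker (Ph i)).subtype)

/-- `ker (P : V^m → V^n)` as a submodule of `Π^m`. -/
abbrev cohKer (Ph : ∀ i, (Fin m → E i) →ₗ[ℂ] (Fin n → E i))
    (V : Submodule ℂ (∀ i, E i)) : Submodule ℂ (∀ i, Fin m → E i) :=
  Vpow V m ⊓ LinearMap.ker (pwMap Ph)

/-- `ran (Q : V^r → V^m)` as a submodule of `Π^m`. -/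
abbrev cohRan (Qh : ∀ i, (Fin r → E i) →ₗ[ℂ] (Fin m → E i))
    (V : Submodule ℂ (∀ i, E i)) : Submodule ℂ (∀ i, Fin m → E i) :=
  (Vpow V r).map (pwMap Qh)

/-- The cohomology `H(V) = ker (P : V^m → V^n) / ran (Q : V^r → V^m)`. -/
abbrev coh (Qh : ∀ i, (Fin r → E i) →ₗ[ℂ] (Fin m → E i))
    (Ph : ∀ i, (Fin m → E i) →ₗ[ℂ] (Fin n → E i))
    (V : Submodule ℂ (∀ i, E i)) : Type _ :=
  ↥(cohKer Ph V) ⧸ ((cohRan Qh V).comap (cohKer Ph V).subtype)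

theorem kerMem (Ph : ∀ i, (Fin m → E i) →ₗ[ℂ] (Fin n → E i))
    {V : Submodule ℂ (∀ i, E i)} (a : ↥(cohKer Ph V)) (i : ι) :
    (a : ∀ j, Fin m → E j) i ∈ LinearMap.ker (Ph i) := by
  have h : pwMap Ph (a : ∀ j, Fin m → E j) = 0 :=
    LinearMap.mem_ker.mp (Submodule.mem_inf.mp a.2).2
  exact LinearMap.mem_ker.mpr (by simpa using congrFun h i)

/-- The map `H(V) → H(W)` induced by an inclusion `V ⊆ W`. -/
def cohMap (Qh : ∀ i, (Fin r → E i) →ₗ[ℂ] (Fin m → E i))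
    (Ph : ∀ i, (Fin m → E i) →ₗ[ℂ] (Fin n → E i))
    {V W : Submodule ℂ (∀ i, E i)} (h : V ≤ W) :
    coh Qh Ph V →ₗ[ℂ] coh Qh Ph W :=
  Submodule.mapQ _ _ (Submodule.inclusion (inf_le_inf_right _ (Vpow_mono h m)))
    (by
      intro x hx
      simp only [Submodule.mem_comap] at hx ⊢
      exact Submodule.map_mono (Vpow_mono h r) hx)

end Coh

/-! Taking classes componentwise maps `H(V)` to `∏ i, ker P̂ i / ran Q̂ i`, compatibly with the
inclusions `Σ ⊆ V ⊆ Π`, so it suffices that this map is bijective for each of the three spaces. It is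
injective as soon as every `Q u ∈ V^m` lies in `Q(V^r)`: for `V` this is the regularity condition,
for `Π` it is trivial, and for `Σ` one discards the components of `u` which `Q` kills. Its image
always contains the finitely supported families of local classes; since `H(V)` is finite dimensional,
only finitely many local cohomology spaces can then be nonzero, so these families exhaust the
product. -/

section FiniteDimensionalPi

theorem bijective_domRestrict_of_forall_nontrivial_mem {F : ι → Type*} [∀ i, Nonempty (F i)]
    {s : Set ι} (hs : ∀ i, Nontrivial (F i) → i ∈ s) :
    Function.Bijective (s.domRestrict : (∀ i, F i) → ∀ i : s, F i) := by
  refine ⟨fun x y hxy => funext fun i => ?_, Subtype.surjective_restrict (· ∈ s)⟩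
  by_cases hi : i ∈ s
  · exact congrFun hxy ⟨i, hi⟩
  · have : Subsingleton (F i) := not_nontrivial_iff_subsingleton.mp (mt (hs i) hi)
    exact Subsingleton.elim _ _

variable {K : Type*} [DivisionRing K] {F : ι → Type*} [∀ i, AddCommGroup (F i)]
  [∀ i, Module K (F i)]

theorem finite_setOf_nontrivial_of_forall_single_mem [DecidableEq ι] (W : Submodule K (∀ i, F i))
    [FiniteDimensional K W] (hW : ∀ i y, Pi.single i y ∈ W) : {i | Nontrivial (F i)}.Finite := by
  let b i := Module.Free.chooseBasis K (F i)
  let w : (Σ i, Module.Free.ChooseBasisIndex K (F i)) → W :=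
    fun p => ⟨Pi.single p.1 (b p.1 p.2), hW _ _⟩
  have hw : LinearIndependent K w := LinearIndependent.of_comp W.subtype <|
    Pi.linearIndependent_single (fun i => b i) fun i => (b i).linearIndependent
  have : Finite (Σ i, Module.Free.ChooseBasisIndex K (F i)) := hw.finite
  refine (Set.finite_range (Sigma.fst (β := fun i => Module.Free.ChooseBasisIndex K (F i)))).subset
    fun i (_ : Nontrivial (F i)) => ?_
  obtain ⟨j⟩ := (b i).index_nonempty
  exact ⟨⟨i, j⟩, rfl⟩

theorem finrank_pi_eq_finsum [Module.Finite K (∀ i, F i)] :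
    Module.finrank K (∀ i, F i) = ∑ᶠ i, Module.finrank K (F i) := by
  classical
  let s := {i | Nontrivial (F i)}
  have hs : s.Finite := finite_setOf_nontrivial_of_forall_single_mem
    (⊤ : Submodule K (∀ i, F i)) fun _ _ => mem_top
  have : Fintype s := hs.fintype
  have (i : ι) : Module.Finite K (F i) :=
    .of_surjective (LinearMap.proj i) (LinearMap.proj_surjective i)
  have hsupport : Function.support (fun i => Module.finrank K (F i)) ⊆ s := fun i hi =>
    Module.nontrivial_of_finrank_pos (Nat.pos_of_ne_zero hi)
  let restrict : (∀ i, F i) →ₗ[K] ∀ i : s, F i := LinearMap.pi fun i => LinearMap.proj (i : ι)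
  have hrestrict : Function.Bijective restrict :=
    bijective_domRestrict_of_forall_nontrivial_mem fun _ hi => hi
  calc
    Module.finrank K (∀ i, F i) = Module.finrank K (∀ i : s, F i) :=
      (LinearEquiv.ofBijective restrict hrestrict).finrank_eq
    _ = ∑ i : s, Module.finrank K (F i) := Module.finrank_pi_fintype K
    _ = ∑ᶠ i ∈ s, Module.finrank K (F i) := by
      rw [← finsum_eq_sum_of_fintype,
        finsum_set_coe_eq_finsum_mem (f := fun i => Module.finrank K (F i))]
    _ = ∑ᶠ i, Module.finrank K (F i) := by
      rw [← finsum_mem_inter_support, Set.inter_eq_self_of_subset_right hsupport,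
        finsum_mem_support]

end FiniteDimensionalPi

section FinSupp

variable {F G : ι → Type*} [∀ i, AddCommGroup (F i)] [∀ i, Module ℂ (F i)]
  [∀ i, AddCommGroup (G i)] [∀ i, Module ℂ (G i)]

theorem single_mem_finSupp [DecidableEq ι] (i : ι) (y : F i) : Pi.single i y ∈ finSupp F :=
  (Set.finite_singleton i).subset fun _ hj => by_contra fun hji => hj (Pi.single_eq_of_ne hji y)

theorem finSupp_eq_top (hF : {i | Nontrivial (F i)}.Finite) : finSupp F = ⊤ :=
  eq_top_iff.mpr fun y _ => hF.subset fun i hi => nontrivial_of_ne (y i) 0 hi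

theorem range_pwMap_inf_finSupp_le_map (T : ∀ i, F i →ₗ[ℂ] G i) :
    LinearMap.range (pwMap T) ⊓ finSupp G ≤ (finSupp F).map (pwMap T) := by
  classical
  rintro _ ⟨⟨u, rfl⟩, hu⟩
  refine ⟨fun i => if T i (u i) = 0 then 0 else u i, ?_, ?_⟩
  · exact Set.Finite.subset hu fun i hi hTu => hi (if_pos hTu)
  · funext i
    by_cases hTu : T i (u i) = 0 <;> simp [hTu]

theorem mem_range_pwMap {T : ∀ i, F i →ₗ[ℂ] G i} {a : ∀ i, G i} :
    a ∈ LinearMap.range (pwMap T) ↔ ∀ i, a i ∈ LinearMap.range (T i) := by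
  refine ⟨?_, fun h => ?_⟩
  · rintro ⟨u, rfl⟩ i
    exact ⟨u i, rfl⟩
  · choose u hu using h
    exact ⟨u, funext hu⟩

end FinSupp

section LocMap

variable {E : ι → Type*} [∀ i, AddCommGroup (E i)] [∀ i, Module ℂ (E i)] {r m n : ℕ}
  {Qh : ∀ i, (Fin r → E i) →ₗ[ℂ] (Fin m → E i)} {Ph : ∀ i, (Fin m → E i) →ₗ[ℂ] (Fin n → E i)}
  {V W : Submodule ℂ (∀ i, E i)}

theorem Vpow_finSupp (k : ℕ) : Vpow (finSupp E) k = finSupp fun i => Fin k → E i := by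
  ext a
  have hsupport : {i | a i ≠ 0} = ⋃ j, {i | a i j ≠ 0} := by
    ext i
    simp only [Set.mem_ofPred_eq, Set.mem_iUnion, Function.ne_iff, Pi.zero_apply]
  change (∀ j, {i | a i j ≠ 0}.Finite) ↔ {i | a i ≠ 0}.Finite
  rw [hsupport]
  exact ⟨Set.finite_iUnion, fun h j => h.subset (Set.subset_iUnion (fun j => {i | a i j ≠ 0}) j)⟩

variable (Qh Ph V) in
/-- The map `H(V) → ∏ i, ker P̂ i / ran Q̂ i` sending the class of a cocycle to the family of
classes of its components, through which the cohomologies of different `V` are compared. -/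
def locMap : coh Qh Ph V →ₗ[ℂ] ∀ i, locCoh Qh Ph i :=
  LinearMap.pi fun i => Submodule.mapQ _ _
    (((LinearMap.proj i).comp (cohKer Ph V).subtype).codRestrict _ fun a => kerMem Ph a i) <| by
      rintro a ⟨u, -, hu⟩
      exact ⟨u i, congrFun hu i⟩

theorem locMap_mk (a : cohKer Ph V) (i : ι) :
    locMap Qh Ph V (Submodule.Quotient.mk a) i = Submodule.Quotient.mk ⟨a.1 i, kerMem Ph a i⟩ :=
  rfl

theorem locMap_comp_cohMap (h : V ≤ W) :
    (locMap Qh Ph W).comp (cohMap Qh Ph h) = locMap Qh Ph V := by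
  ext x
  obtain ⟨a, rfl⟩ := Submodule.Quotient.mk_surjective _ x
  rfl

theorem cohMap_bijective (h : V ≤ W) (hV : Function.Bijective (locMap Qh Ph V))
    (hW : Function.Bijective (locMap Qh Ph W)) : Function.Bijective (cohMap Qh Ph h) := by
  rwa [← Function.Bijective.of_comp_iff' hW, ← LinearMap.coe_comp, locMap_comp_cohMap]

theorem locMap_injective (h : LinearMap.range (pwMap Qh) ⊓ Vpow V m ≤ cohRan Qh V) :
    Function.Injective (locMap Qh Ph V) := by
  rw [injective_iff_map_eq_zero]
  intro x hx
  obtain ⟨a, rfl⟩ := Submodule.Quotient.mk_surjective _ x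
  have hcomponents (i : ι) : a.1 i ∈ LinearMap.range (Qh i) := by
    simpa only [locMap_mk, Pi.zero_apply, Submodule.Quotient.mk_eq_zero, mem_comap, subtype_apply]
      using congrFun hx i
  exact (Submodule.Quotient.mk_eq_zero _).mpr (h ⟨mem_range_pwMap.mpr hcomponents, a.2.1⟩)

theorem range_pwMap_inf_Vpow_finSupp_le_cohRan :
    LinearMap.range (pwMap Qh) ⊓ Vpow (finSupp E) m ≤ cohRan Qh (finSupp E) := by
  simpa only [cohRan, Vpow_finSupp] using range_pwMap_inf_finSupp_le_map Qh

theorem range_pwMap_inf_Vpow_top_le_cohRan :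
    LinearMap.range (pwMap Qh) ⊓ Vpow ⊤ m ≤ cohRan Qh ⊤ := by
  rintro _ ⟨⟨u, rfl⟩, -⟩
  exact ⟨u, fun _ => mem_top, rfl⟩

theorem range_pwMap_inf_Vpow_le_cohRan_of_regular
    (hreg : ∀ u : ∀ i, Fin r → E i, pwMap Qh u ∈ Vpow V m →
      ∃ v : ∀ i, Fin r → E i, (∀ i, Qh i (v i) = 0) ∧ u - v ∈ Vpow V r) :
    LinearMap.range (pwMap Qh) ⊓ Vpow V m ≤ cohRan Qh V := by
  rintro _ ⟨⟨u, rfl⟩, hu⟩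
  obtain ⟨v, hv, huv⟩ := hreg u hu
  have hQv : pwMap Qh v = 0 := funext hv
  exact ⟨u - v, huv, by rw [map_sub, hQv, sub_zero]⟩

theorem finSupp_le_range_locMap (hV : finSupp E ≤ V) :
    finSupp (locCoh Qh Ph) ≤ LinearMap.range (locMap Qh Ph V) := by
  intro y hy
  let classOf i := ((LinearMap.range (Qh i)).comap (LinearMap.ker (Ph i)).subtype).mkQ
  have hrange : y ∈ LinearMap.range (pwMap classOf) :=
    mem_range_pwMap.mpr fun i => mkQ_surjective _ (y i)
  obtain ⟨a, ha, rfl⟩ := range_pwMap_inf_finSupp_le_map classOf ⟨hrange, hy⟩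
  have ha' : (fun i => (a i : Fin m → E i)) ∈ Vpow (finSupp E) m := by
    rw [Vpow_finSupp]
    exact Set.Finite.subset ha fun i hi h0 => hi (congrArg Subtype.val h0)
  exact ⟨Submodule.Quotient.mk ⟨_, Vpow_mono hV m ha', funext fun i => (a i).2⟩, rfl⟩

theorem finite_setOf_nontrivial_locCoh [FiniteDimensional ℂ (coh Qh Ph V)]
    (hV : finSupp E ≤ V) : {i | Nontrivial (locCoh Qh Ph i)}.Finite := by
  classical
  exact finite_setOf_nontrivial_of_forall_single_mem (K := ℂ) (F := locCoh Qh Ph)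
    (LinearMap.range (locMap Qh Ph V))
    fun i y => finSupp_le_range_locMap hV (single_mem_finSupp i y)

theorem locMap_surjective (hV : finSupp E ≤ V) (hfin : {i | Nontrivial (locCoh Qh Ph i)}.Finite) :
    Function.Surjective (locMap Qh Ph V) := by
  rw [← LinearMap.range_eq_top, eq_top_iff, ← finSupp_eq_top hfin]
  exact finSupp_le_range_locMap hV

end LocMap

theorem statement_6_general {E : ι → Type*} [∀ i, AddCommGroup (E i)] [∀ i, Module ℂ (E i)]
    {r m n : ℕ} (Qh : ∀ i, (Fin r → E i) →ₗ[ℂ] (Fin m → E i))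
    (Ph : ∀ i, (Fin m → E i) →ₗ[ℂ] (Fin n → E i))
    (V : Submodule ℂ (∀ i, E i)) (hSigmaV : finSupp E ≤ V)
    (hfin : FiniteDimensional ℂ (coh Qh Ph V))
    (hreg : ∀ u : ∀ i, Fin r → E i, pwMap Qh u ∈ Vpow V m →
      ∃ v : ∀ i, Fin r → E i, (∀ i, Qh i (v i) = 0) ∧ u - v ∈ Vpow V r) :
    Function.Bijective (cohMap Qh Ph hSigmaV) ∧
      Function.Bijective (cohMap Qh Ph (le_top : V ≤ ⊤)) ∧
      Module.finrank ℂ (coh Qh Ph V) = ∑ᶠ i, Module.finrank ℂ (locCoh Qh Ph i) := by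
  have hloc : {i | Nontrivial (locCoh Qh Ph i)}.Finite := finite_setOf_nontrivial_locCoh hSigmaV
  have hbijSigma : Function.Bijective (locMap Qh Ph (finSupp E)) :=
    ⟨locMap_injective range_pwMap_inf_Vpow_finSupp_le_cohRan, locMap_surjective le_rfl hloc⟩
  have hbijV : Function.Bijective (locMap Qh Ph V) :=
    ⟨locMap_injective (range_pwMap_inf_Vpow_le_cohRan_of_regular hreg),
      locMap_surjective hSigmaV hloc⟩
  have hbijPi : Function.Bijective (locMap Qh Ph ⊤) :=
    ⟨locMap_injective range_pwMap_inf_Vpow_top_le_cohRan, locMap_surjective le_top hloc⟩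
  let e := LinearEquiv.ofBijective (locMap Qh Ph V) hbijV
  have : Module.Finite ℂ (∀ i, locCoh Qh Ph i) := .equiv e
  exact ⟨cohMap_bijective hSigmaV hbijSigma hbijV, cohMap_bijective le_top hbijV hbijPi,
    e.finrank_eq.trans (finrank_pi_eq_finsum (F := locCoh Qh Ph))⟩

theorem statement_6 {ι : Type*} [Countable ι] (E : ι → Type*)
    [∀ i, NormedAddCommGroup (E i)] [∀ i, InnerProductSpace ℂ (E i)]
    [∀ i, FiniteDimensional ℂ (E i)] (r m n : ℕ)
    (Qh : ∀ i, (Fin r → E i) →ₗ[ℂ] (Fin m → E i))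
    (Ph : ∀ i, (Fin m → E i) →ₗ[ℂ] (Fin n → E i))
    (hPQ : ∀ i, (Ph i).comp (Qh i) = 0)
    (V : Submodule ℂ (∀ i, E i)) (hSigmaV : finSupp E ≤ V)
    (hQ : (Vpow V r).map (pwMap Qh) ≤ Vpow V m)
    (hP : (Vpow V m).map (pwMap Ph) ≤ Vpow V n)
    (hfin : FiniteDimensional ℂ (coh Qh Ph V))
    (hreg : ∀ u : ∀ i, Fin r → E i, pwMap Qh u ∈ Vpow V m →
      ∃ v : ∀ i, Fin r → E i, (∀ i, Qh i (v i) = 0) ∧ u - v ∈ Vpow V r) :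
    Function.Bijective (cohMap Qh Ph hSigmaV) ∧
      Function.Bijective (cohMap Qh Ph (le_top : V ≤ ⊤)) ∧
      Module.finrank ℂ (coh Qh Ph V) = ∑ᶠ i, Module.finrank ℂ (locCoh Qh Ph i) :=
  statement_6_general Qh Ph V hSigmaV hfin hreg
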